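/- If θ is an angle function for α, then at every point (s, v) with D := v²f(s)² + (sin θ(s) + v·g(s))² ≠ 0, the Gaussian curvature of the C-ruled surface, K = (L·N − M²)/(EG − F²), equals K = −f(s)²·sin²θ(s)/D² = −τ(s)²/D². -/

import Mathlib

open RealInnerProductSpace

/-- Cross product on `EuclideanSpace ℝ (Fin 3)`. -/
noncomputable def cross3 (u v : EuclideanSpace ℝ (Fin 3)) : EuclideanSpace ℝ (Fin 3) :=
  (EuclideanSpace.equiv (Fin 3) ℝ).symm
    (crossProduct ((EuclideanSpace.equiv (Fin 3) ℝ) u) ((EuclideanSpace.equiv (Fin 3) ℝ) v))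

/-- Determinant of the 3×3 matrix whose rows are the given vectors. -/
noncomputable def det3 (u v w : EuclideanSpace ℝ (Fin 3)) : ℝ :=
  Matrix.det (Matrix.of ![(EuclideanSpace.equiv (Fin 3) ℝ) u,
    (EuclideanSpace.equiv (Fin 3) ℝ) v, (EuclideanSpace.equiv (Fin 3) ℝ) w])

theorem cross3_apply (u v : EuclideanSpace ℝ (Fin 3)) :
    cross3 u v 0 = u 1 * v 2 - u 2 * v 1 ∧ cross3 u v 1 = u 2 * v 0 - u 0 * v 2 ∧
      cross3 u v 2 = u 0 * v 1 - u 1 * v 0 := by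
  simp [cross3, cross_apply]

theorem det3_eq (u v w : EuclideanSpace ℝ (Fin 3)) :
    det3 u v w = u 0 * v 1 * w 2 - u 0 * v 2 * w 1 - u 1 * v 0 * w 2 + u 1 * v 2 * w 0
      + u 2 * v 0 * w 1 - u 2 * v 1 * w 0 := by
  simp [det3, Matrix.det_fin_three]

theorem inner_eq_coords (u v : EuclideanSpace ℝ (Fin 3)) :
    ⟪u, v⟫ = u 0 * v 0 + u 1 * v 1 + u 2 * v 2 := by
  simp [PiLp.inner_apply, Fin.sum_univ_three, mul_comm]

theorem hasDerivAt_euclidean_iff {ι : Type*} [Fintype ι] {u : ℝ → EuclideanSpace ℝ ι}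
    {u' : EuclideanSpace ℝ ι} {s : ℝ} :
    HasDerivAt u u' s ↔ ∀ i, HasDerivAt (fun x => u x i) (u' i) s := by
  simp only [hasDerivAt_iff_hasFDerivAt, ← hasFDerivWithinAt_univ, hasFDerivWithinAt_euclidean]
  refine forall_congr' fun i => ?_
  congr! 1

theorem hasDerivAt_cross3 {u v : ℝ → EuclideanSpace ℝ (Fin 3)} {u' v' : EuclideanSpace ℝ (Fin 3)}
    {s : ℝ} (hu : HasDerivAt u u' s) (hv : HasDerivAt v v' s) :
    HasDerivAt (fun x => cross3 (u x) (v x)) (cross3 u' (v s) + cross3 (u s) v') s := by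
  have hu := hasDerivAt_euclidean_iff.1 hu
  have hv := hasDerivAt_euclidean_iff.1 hv
  refine hasDerivAt_euclidean_iff.2 fun i => ?_
  fin_cases i
  · simp only [Fin.zero_eta, PiLp.add_apply, (cross3_apply _ _).1]
    refine (((hu 1).fun_mul (hv 2)).fun_sub ((hu 2).fun_mul (hv 1))).congr_deriv ?_
    ring
  · simp only [Fin.mk_one, PiLp.add_apply, (cross3_apply _ _).2.1]
    refine (((hu 2).fun_mul (hv 0)).fun_sub ((hu 0).fun_mul (hv 2))).congr_deriv ?_
    ring
  · simp only [Fin.reduceFinMk, PiLp.add_apply, (cross3_apply _ _).2.2]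
    refine (((hu 0).fun_mul (hv 1)).fun_sub ((hu 1).fun_mul (hv 0))).congr_deriv ?_
    ring

theorem cross3_smul_self (c : ℝ) (u : EuclideanSpace ℝ (Fin 3)) : cross3 (c • u) u = 0 := by
  ext i
  fin_cases i <;> simp [cross3_apply] <;> ring

theorem inner_cross3_left (u v : EuclideanSpace ℝ (Fin 3)) : ⟪u, cross3 u v⟫ = 0 := by
  simp only [inner_eq_coords, cross3_apply]
  ring

theorem inner_cross3_right (u v : EuclideanSpace ℝ (Fin 3)) : ⟪v, cross3 u v⟫ = 0 := by
  simp only [inner_eq_coords, cross3_apply]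
  ring

theorem inner_cross3_self (u v : EuclideanSpace ℝ (Fin 3)) :
    ⟪cross3 u v, cross3 u v⟫ = ⟪u, u⟫ * ⟪v, v⟫ - ⟪u, v⟫ ^ 2 := by
  simp only [inner_eq_coords, cross3_apply]
  ring

theorem det3_cross3 (u v : EuclideanSpace ℝ (Fin 3)) :
    det3 u v (cross3 u v) = ⟪u, u⟫ * ⟪v, v⟫ - ⟪u, v⟫ ^ 2 := by
  simp only [inner_eq_coords, det3_eq, cross3_apply]
  ring

/-- If `n` is a unit vector orthogonal to `t` and `p`, then `t × p` is a multiple of `n`. -/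
theorem cross3_eq_neg_inner_smul {t n p : EuclideanSpace ℝ (Fin 3)} (hnn : ⟪n, n⟫ = 1)
    (htn : ⟪t, n⟫ = 0) (hpn : ⟪p, n⟫ = 0) : cross3 t p = -(⟪p, cross3 t n⟫ • n) := by
  simp only [inner_eq_coords, cross3_apply] at *
  ext i
  fin_cases i
  · simp [cross3_apply]
    linear_combination (-(t 1 * p 2 - t 2 * p 1)) * hnn
      + (n 1 * p 2 - n 2 * p 1) * htn - (n 1 * t 2 - n 2 * t 1) * hpn
  · simp [cross3_apply]
    linear_combination (-(t 2 * p 0 - t 0 * p 2)) * hnn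
      + (n 2 * p 0 - n 0 * p 2) * htn - (n 2 * t 0 - n 0 * t 2) * hpn
  · simp [cross3_apply]
    linear_combination (-(t 0 * p 1 - t 1 * p 0)) * hnn
      + (n 0 * p 1 - n 1 * p 0) * htn - (n 0 * t 1 - n 1 * t 0) * hpn

theorem inner_deriv_eq_zero_of_norm_eq_one {u : ℝ → EuclideanSpace ℝ (Fin 3)}
    {u' : EuclideanSpace ℝ (Fin 3)} {s : ℝ} (hu : HasDerivAt u u' s) (h : ∀ x, ‖u x‖ = 1) :
    ⟪u s, u'⟫ = 0 := by
  have h1 := hu.inner ℝ hu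
  have h2 : (fun x => ⟪u x, u x⟫) = fun _ => (1 : ℝ) := by
    funext x
    rw [real_inner_self_eq_norm_sq, h x, one_pow]
  rw [h2, real_inner_comm (u s) u'] at h1
  have := h1.unique (hasDerivAt_const s (1 : ℝ))
  linarith

/-- Determinant of the three vectors governing the second fundamental form of the ruled surface,
expressed in the frame `t, n, b`. -/
theorem det3_ruled (t n b : EuclideanSpace ℝ (Fin 3)) (c d f g v : ℝ) :
    det3 (t + v • (g • (d • t + c • b) - f • n)) ((-c) • t + d • b)
      (g • (d • t + c • b) - f • n) = f * d * det3 t n b := by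
  simp only [det3_eq, PiLp.add_apply, PiLp.sub_apply, PiLp.smul_apply, smul_eq_mul]
  ring

/-- Gram determinant of the ruled surface in an orthonormal frame `t, n, b`. -/
theorem gram_ruled {t n b : EuclideanSpace ℝ (Fin 3)} {c d : ℝ} (f g v : ℝ)
    (htt : ⟪t, t⟫ = 1) (hnn : ⟪n, n⟫ = 1) (hbb : ⟪b, b⟫ = 1)
    (htn : ⟪t, n⟫ = 0) (htb : ⟪t, b⟫ = 0) (hnb : ⟪n, b⟫ = 0) (hcd : c ^ 2 + d ^ 2 = 1) :
    ‖t + v • (g • (d • t + c • b) - f • n)‖ ^ 2 * ‖(-c) • t + d • b‖ ^ 2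
      - ⟪t + v • (g • (d • t + c • b) - f • n), (-c) • t + d • b⟫ ^ 2
      = v ^ 2 * f ^ 2 + (d + v * g) ^ 2 := by
  have hnt : ⟪n, t⟫ = 0 := by rw [real_inner_comm, htn]
  have hbt : ⟪b, t⟫ = 0 := by rw [real_inner_comm, htb]
  have hbn : ⟪b, n⟫ = 0 := by rw [real_inner_comm, hnb]
  simp only [← real_inner_self_eq_norm_sq, inner_add_left, inner_add_right, inner_sub_left,
    inner_sub_right, real_inner_smul_left, real_inner_smul_right, htt, hnn, hbb, htn, htb, hnb,
    hnt, hbt, hbn]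
  have hc : c ^ 2 = 1 - d ^ 2 := by linarith
  ring_nf
  grind

theorem stmt_12
    (α : ℝ → EuclideanSpace ℝ (Fin 3))
    (hα : ContDiff ℝ (⊤ : ℕ∞) α)
    (hunit : ∀ s, ‖deriv α s‖ = 1)
    (T : ℝ → EuclideanSpace ℝ (Fin 3)) (hT : ∀ s, T s = deriv α s)
    (κ : ℝ → ℝ) (hκ : ∀ s, κ s = ‖deriv (deriv α) s‖) (hκpos : ∀ s, 0 < κ s)
    (N : ℝ → EuclideanSpace ℝ (Fin 3)) (hN : ∀ s, N s = (κ s)⁻¹ • deriv (deriv α) s)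
    (B : ℝ → EuclideanSpace ℝ (Fin 3)) (hB : ∀ s, B s = cross3 (T s) (N s))
    (τ : ℝ → ℝ) (hτ : ∀ s, τ s = ⟪deriv N s, B s⟫)
    (f : ℝ → ℝ) (hf : ∀ s, f s = Real.sqrt (κ s ^ 2 + τ s ^ 2))
    (g : ℝ → ℝ) (hg : ∀ s, g s = κ s ^ 2 / (κ s ^ 2 + τ s ^ 2) * deriv (fun u => τ u / κ u) s)
    (C : ℝ → EuclideanSpace ℝ (Fin 3))
    (hC : ∀ s, C s = (Real.sqrt (κ s ^ 2 + τ s ^ 2))⁻¹ • ((-κ s) • T s + τ s • B s))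
    (W : ℝ → EuclideanSpace ℝ (Fin 3))
    (hW : ∀ s, W s = (Real.sqrt (κ s ^ 2 + τ s ^ 2))⁻¹ • (τ s • T s + κ s • B s))
    (θ : ℝ → ℝ) (hθdiff : Differentiable ℝ θ)
    (hθderiv : ∀ s, deriv θ s = g s)
    (hθκ : ∀ s, κ s = f s * Real.cos (θ s))
    (hθτ : ∀ s, τ s = f s * Real.sin (θ s))
    (φs φv : ℝ → ℝ → EuclideanSpace ℝ (Fin 3))
    (hφs : ∀ s v, φs s v = deriv (fun u => α u + v • C u) s)
    (hφv : ∀ s v, φv s v = deriv (fun w => α s + w • C s) v)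
    (φss φsv φvv : ℝ → ℝ → EuclideanSpace ℝ (Fin 3))
    (hφss : ∀ s v, φss s v = deriv (fun u => φs u v) s)
    (hφsv : ∀ s v, φsv s v = deriv (fun u => φv u v) s)
    (hφvv : ∀ s v, φvv s v = deriv (fun w => φv s w) v)
    (EE FF GG LL MM NN : ℝ → ℝ → ℝ)
    (hEE : ∀ s v, EE s v = ‖φs s v‖ ^ 2)
    (hFF : ∀ s v, FF s v = ⟪φs s v, φv s v⟫)
    (hGG : ∀ s v, GG s v = ‖φv s v‖ ^ 2)
    (hLL : ∀ s v, LL s v =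
      det3 (φs s v) (φv s v) (φss s v) / Real.sqrt (EE s v * GG s v - FF s v ^ 2))
    (hMM : ∀ s v, MM s v =
      det3 (φs s v) (φv s v) (φsv s v) / Real.sqrt (EE s v * GG s v - FF s v ^ 2))
    (hNN : ∀ s v, NN s v =
      det3 (φs s v) (φv s v) (φvv s v) / Real.sqrt (EE s v * GG s v - FF s v ^ 2)) :
    ∀ (s v : ℝ),
      v ^ 2 * f s ^ 2 + (Real.sin (θ s) + v * g s) ^ 2 ≠ 0 →
      (LL s v * NN s v - MM s v ^ 2) / (EE s v * GG s v - FF s v ^ 2) =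
        -(f s ^ 2 * Real.sin (θ s) ^ 2) /
          (v ^ 2 * f s ^ 2 + (Real.sin (θ s) + v * g s) ^ 2) ^ 2 ∧
      (LL s v * NN s v - MM s v ^ 2) / (EE s v * GG s v - FF s v ^ 2) =
        -(τ s ^ 2) / (v ^ 2 * f s ^ 2 + (Real.sin (θ s) + v * g s) ^ 2) ^ 2 := by
  have hfpos : ∀ s, 0 < f s := fun s => by
    have := hκpos s
    rw [hf]
    positivity
  have hCeq : ∀ s, C s = (-Real.cos (θ s)) • T s + Real.sin (θ s) • B s := fun s => by
    have := (hfpos s).ne'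
    rw [hC, ← hf, smul_add, smul_smul, smul_smul]
    congr 2
    · rw [hθκ s]
      field_simp
    · rw [hθτ s]
      field_simp
  have hα1 : ContDiff ℝ (⊤ : ℕ∞) (deriv α) := (contDiff_infty_iff_deriv.1 hα).2
  have hα2 : ContDiff ℝ (⊤ : ℕ∞) (deriv (deriv α)) := (contDiff_infty_iff_deriv.1 hα1).2
  have hne : ∀ s, deriv (deriv α) s ≠ 0 := fun s h => by
    have := hκpos s
    rw [hκ, h, norm_zero] at this
    exact this.false
  have hTeq : T = deriv α := funext hT
  have hT1 : ∀ s, ‖T s‖ = 1 := fun s => by rw [hT, hunit]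
  have hN1 : ∀ s, ‖N s‖ = 1 := fun s => by
    rw [hN, norm_smul, norm_inv, hκ, norm_norm, inv_mul_cancel₀ (norm_ne_zero_iff.2 (hne s))]
  have hTd : ∀ s, HasDerivAt T (κ s • N s) s := fun s => by
    rw [hN, smul_inv_smul₀ (hκpos s).ne', hTeq]
    exact (hα1.differentiable (by simp) s).hasDerivAt
  have hNd : ∀ s, HasDerivAt N (deriv N s) s := fun s => by
    have h2 := hα2.differentiable (by simp) s
    have hN' : N = fun x => (‖deriv (deriv α) x‖)⁻¹ • deriv (deriv α) x := by
      funext x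
      rw [hN, hκ]
    have : DifferentiableAt ℝ N s := by
      rw [hN']
      exact ((h2.norm ℝ (hne s)).inv (norm_ne_zero_iff.2 (hne s))).smul h2
    exact this.hasDerivAt
  have hTN : ∀ s, ⟪T s, N s⟫ = 0 := fun s => by
    have h := inner_deriv_eq_zero_of_norm_eq_one (hTd s) hT1
    rw [real_inner_smul_right] at h
    exact (mul_eq_zero.1 h).resolve_left (hκpos s).ne'
  have hTT : ∀ s, ⟪T s, T s⟫ = 1 := fun s => by rw [real_inner_self_eq_norm_sq, hT1, one_pow]
  have hNN1 : ∀ s, ⟪N s, N s⟫ = 1 := fun s => by rw [real_inner_self_eq_norm_sq, hN1, one_pow]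
  have hBd : ∀ s, HasDerivAt B (-(τ s • N s)) s := fun s => by
    have hNN' := inner_deriv_eq_zero_of_norm_eq_one (hNd s) hN1
    rw [real_inner_comm] at hNN'
    have h := hasDerivAt_cross3 (hTd s) (hNd s)
    rwa [cross3_smul_self, zero_add, cross3_eq_neg_inner_smul (hNN1 s) (hTN s) hNN', ← hB, ← hτ,
      ← funext hB] at h
  have hCd : ∀ s, HasDerivAt C (g s • (Real.sin (θ s) • T s + Real.cos (θ s) • B s)
      - f s • N s) s := fun s => by
    have hθd : HasDerivAt θ (g s) s := hθderiv s ▸ (hθdiff s).hasDerivAt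
    have h := (hθd.cos.fun_neg.fun_smul (hTd s)).fun_add (hθd.sin.fun_smul (hBd s))
    rw [funext hCeq]
    refine h.congr_deriv ?_
    rw [hθκ s, hθτ s]
    linear_combination (norm := module) (-(f s) * Real.sin_sq_add_cos_sq (θ s)) • N s
  intro s v hD
  have hφs' : φs s v = T s + v • (g s • (Real.sin (θ s) • T s + Real.cos (θ s) • B s)
      - f s • N s) := by
    rw [hφs, ((hα.differentiable (by simp) s).hasDerivAt.fun_add
      ((hCd s).fun_const_smul v)).deriv, hT]
  have hφv' : ∀ s v, φv s v = C s := fun s v => by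
    rw [hφv]
    simpa using (((hasDerivAt_id v).smul_const (C s)).const_add (α s)).deriv
  have hφsv' : φsv s v = g s • (Real.sin (θ s) • T s + Real.cos (θ s) • B s) - f s • N s := by
    simp only [hφsv, hφv']
    exact (hCd s).deriv
  have hφvv' : φvv s v = 0 := by
    simp only [hφvv, hφv', deriv_const]
  have hNN0 : NN s v = 0 := by
    simp [hNN, hφvv', det3_eq]
  have hgram : EE s v * GG s v - FF s v ^ 2
      = v ^ 2 * f s ^ 2 + (Real.sin (θ s) + v * g s) ^ 2 := by
    rw [hEE, hFF, hGG, hφs', hφv', hCeq]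
    refine gram_ruled _ _ _ (hTT s) (hNN1 s) ?_ (hTN s) ?_ ?_ (Real.cos_sq_add_sin_sq _) <;> rw [hB]
    · rw [inner_cross3_self, hTT, hNN1, hTN]
      norm_num
    · exact inner_cross3_left _ _
    · exact inner_cross3_right _ _
  have hdet : det3 (φs s v) (φv s v) (φsv s v) = τ s := by
    rw [hφs', hφv', hφsv', hCeq, det3_ruled, hB, det3_cross3, hTT, hNN1, hTN, hθτ s]
    ring
  have hK : (LL s v * NN s v - MM s v ^ 2) / (EE s v * GG s v - FF s v ^ 2) =
      -(τ s ^ 2) / (v ^ 2 * f s ^ 2 + (Real.sin (θ s) + v * g s) ^ 2) ^ 2 := by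
    rw [hMM, hNN0, hdet, hgram, div_pow, Real.sq_sqrt (by positivity)]
    field_simp
    ring
  exact ⟨by rw [hK, hθτ s, mul_pow], hK⟩
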